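/- Let 𝔊 be a homothecy invariant collection of open rectangles in ℝⁿ, let μ be a nonzero locally finite nonnegative Borel measure doubling with respect to 𝔊 with constant Δ_μ, and fix β ∈ (0,1). Suppose E ⊆ ℝⁿ is a Borel set, R ∈ 𝔊, μ(R) > 0, and μ(E ∩ R)/μ(R) = α for some α ∈ (0,β). Then R ⊆ H_β^{k_{α,β}}(E), where k_{α,β} = ⌈ log₂(β/α) / log₂(1/β) ⌉ · ⌈ 2 + log₂⁺(β·Δ_μ) / log₂(1/β) ⌉ + 1, with log⁺ t = max(log₂ t, 0) and ⌈x⌉ the least integer ≥ x. -/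

import Mathlib

open MeasureTheory Set Filter
open scoped ENNReal Topology Pointwise

noncomputable section

/-- The maximal operator `M_{𝔅,μ}` associated to a measure `μ` and a collection `𝔅`
of subsets of `ℝⁿ`, applied to `f` at the point `x` (valued in `ℝ≥0∞`; it equals `0`
outside the union of `𝔅`). -/
noncomputable def maxOp {n : ℕ} (μ : Measure (EuclideanSpace ℝ (Fin n)))
    (𝔅 : Set (Set (EuclideanSpace ℝ (Fin n))))
    (f : EuclideanSpace ℝ (Fin n) → ℝ) (x : EuclideanSpace ℝ (Fin n)) : ℝ≥0∞ :=
  ⨆ (B : Set (EuclideanSpace ℝ (Fin n))) (_ : B ∈ 𝔅) (_ : x ∈ B) (_ : 0 < μ B),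
    (∫⁻ y in B, ENNReal.ofReal |f y| ∂μ) / μ B

/-- A collection of sets is homothecy invariant if it is closed under translations and
positive dilations. -/
def HomothecyInvariant {n : ℕ} (𝔅 : Set (Set (EuclideanSpace ℝ (Fin n)))) : Prop :=
  ∀ B ∈ 𝔅, (∀ y : EuclideanSpace ℝ (Fin n), y +ᵥ B ∈ 𝔅) ∧ (∀ s : ℝ, 0 < s → s • B ∈ 𝔅)

/-- `μ` is doubling with respect to the collection `𝔅`, with constant `Δ`: whenever
`B ∈ 𝔅` and a translate of the dilate `2·B` contains `B`, its measure is at most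
`Δ·μ(B)`. -/
def DoublingWrt {n : ℕ} (μ : Measure (EuclideanSpace ℝ (Fin n)))
    (𝔅 : Set (Set (EuclideanSpace ℝ (Fin n)))) (Δ : ℝ) : Prop :=
  ∀ B ∈ 𝔅, ∀ σ : EuclideanSpace ℝ (Fin n),
    B ⊆ σ +ᵥ (2 : ℝ) • B → μ (σ +ᵥ (2 : ℝ) • B) ≤ ENNReal.ofReal Δ * μ B

/-- A member of a basis of convex sets: nonempty, bounded, open and convex. -/
def IsConvexBasisSet {n : ℕ} (B : Set (EuclideanSpace ℝ (Fin n))) : Prop :=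
  B.Nonempty ∧ Bornology.IsBounded B ∧ IsOpen B ∧ Convex ℝ B

/-- An open axis-parallel rectangle in `ℝⁿ`. -/
def IsAxisRect {n : ℕ} (R : Set (EuclideanSpace ℝ (Fin n))) : Prop :=
  ∃ a b : Fin n → ℝ, (∀ i, a i < b i) ∧ R = {x | ∀ i, x i ∈ Set.Ioo (a i) (b i)}

/-- An open rectangle (possibly rotated rectangular parallelepiped) in `ℝⁿ`:
the image of an open axis-parallel rectangle under a rigid motion. -/
def IsRect {n : ℕ} (R : Set (EuclideanSpace ℝ (Fin n))) : Prop :=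
  ∃ (f : EuclideanSpace ℝ (Fin n) ≃ᵢ EuclideanSpace ℝ (Fin n))
    (S : Set (EuclideanSpace ℝ (Fin n))), IsAxisRect S ∧ R = f '' S

/-- An open axis-parallel cube in `ℝⁿ`. -/
def IsAxisCube {n : ℕ} (C : Set (EuclideanSpace ℝ (Fin n))) : Prop :=
  ∃ (a : Fin n → ℝ) (s : ℝ), 0 < s ∧ C = {x | ∀ i, x i ∈ Set.Ioo (a i) (a i + s)}

/-- `M_{𝔅,μ}` is bounded on `L^p(ν)`. -/
def BoundedOnLp {n : ℕ} (μ ν : Measure (EuclideanSpace ℝ (Fin n)))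
    (𝔅 : Set (Set (EuclideanSpace ℝ (Fin n)))) (p : ℝ) : Prop :=
  ∃ C : ℝ≥0∞, C ≠ ⊤ ∧ ∀ f : EuclideanSpace ℝ (Fin n) → ℝ, Measurable f →
    ∫⁻ x, maxOp μ 𝔅 f x ^ p ∂ν ≤ C * ∫⁻ x, ENNReal.ofReal |f x| ^ p ∂ν

/-- The Tauberian condition for `M_{𝔅,μ}` at level `γ`, with constant `c`, with respect
to the measure `ν`. -/
def TauberianCond {n : ℕ} (μ ν : Measure (EuclideanSpace ℝ (Fin n)))
    (𝔅 : Set (Set (EuclideanSpace ℝ (Fin n)))) (γ c : ℝ) : Prop :=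
  ∀ E : Set (EuclideanSpace ℝ (Fin n)), MeasurableSet E →
    ν {x | ENNReal.ofReal γ < maxOp μ 𝔅 (E.indicator 1) x} ≤ ENNReal.ofReal c * ν E

/-- The standard open dyadic box of scale `2^k` and position `m` in `ℝⁿ`. -/
def stdBox (n : ℕ) (k : ℤ) (m : Fin n → ℤ) : Set (Fin n → ℝ) :=
  {x | ∀ i, (m i : ℝ) * 2 ^ k < x i ∧ x i < ((m i : ℝ) + 1) * 2 ^ k}

/-- A parametrization of a rectangular grid: a rigid motion composed with a positive
diagonal scaling. The image of the standard unit box under such a map is a rectangle. -/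
def IsRectParam {n : ℕ} (T : (Fin n → ℝ) → EuclideanSpace ℝ (Fin n)) : Prop :=
  ∃ (f : EuclideanSpace ℝ (Fin n) ≃ᵢ EuclideanSpace ℝ (Fin n)) (l : Fin n → ℝ),
    (∀ i, 0 < l i) ∧
    ∀ x, T x = f ((WithLp.equiv 2 (Fin n → ℝ)).symm (fun i => l i * x i))

/-- The dyadic mesh generated by a rectangle parametrized by `T`. -/
def dyadicMesh {n : ℕ} (T : (Fin n → ℝ) → EuclideanSpace ℝ (Fin n)) :
    Set (Set (EuclideanSpace ℝ (Fin n))) :=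
  {S | ∃ (k : ℤ) (m : Fin n → ℤ), S = T '' stdBox n k m}

/-- `S` is a dyadic descendant of the rectangle `R`, `s` generations inside `R`. -/
def DyadicDescendant {n : ℕ} (R S : Set (EuclideanSpace ℝ (Fin n))) (s : ℕ) : Prop :=
  ∃ T : (Fin n → ℝ) → EuclideanSpace ℝ (Fin n), IsRectParam T ∧
    T '' stdBox n 0 0 = R ∧
    ∃ m : Fin n → ℤ, (∀ i, 0 ≤ m i ∧ m i < 2 ^ s) ∧ S = T '' stdBox n (-(s : ℤ)) m

/-- The family of all homothetic copies (translates and positive dilates) of `R₀`. -/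
def homCopies {n : ℕ} (R₀ : Set (EuclideanSpace ℝ (Fin n))) :
    Set (Set (EuclideanSpace ℝ (Fin n))) :=
  {S | ∃ (y : EuclideanSpace ℝ (Fin n)) (s : ℝ), 0 < s ∧ S = y +ᵥ s • R₀}

/-- Iterated halo sets `H_β^k(E)`: `H_β^0(E) = E` and
`H_β^{k+1}(E) = {x : M_{𝔊,μ}(1_{H_β^k(E)})(x) ≥ β}`. -/
def Hiter {n : ℕ} (μ : Measure (EuclideanSpace ℝ (Fin n)))
    (𝔊 : Set (Set (EuclideanSpace ℝ (Fin n)))) (β : ℝ)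
    (E : Set (EuclideanSpace ℝ (Fin n))) : ℕ → Set (EuclideanSpace ℝ (Fin n))
  | 0 => E
  | k + 1 => {x | ENNReal.ofReal β ≤ maxOp μ 𝔊 ((Hiter μ 𝔊 β E k).indicator 1) x}

/-- The Muckenhoupt `A_{p,𝔅}` condition for a weight `w` (with respect to Lebesgue
measure); here `1 - p/(p-1) = 1 - p'`. -/
def MuckenhouptAp {n : ℕ} (𝔅 : Set (Set (EuclideanSpace ℝ (Fin n))))
    (w : EuclideanSpace ℝ (Fin n) → ℝ) (p : ℝ) : Prop :=
  ∃ C : ℝ≥0∞, C ≠ ⊤ ∧ ∀ B ∈ 𝔅,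
    ((∫⁻ x in B, ENNReal.ofReal (w x) ∂volume) / volume B) *
      (((∫⁻ x in B, ENNReal.ofReal (w x) ^ (1 - p / (p - 1)) ∂volume) / volume B) ^ (p - 1))
      ≤ C

/-- `𝔅` is a Muckenhoupt basis: for every `1 < p < ∞` and every weight `w ∈ A_{p,𝔅}`,
the maximal operator `M_𝔅` is bounded on `L^p(w)`. -/
def MuckenhouptBasis {n : ℕ} (𝔅 : Set (Set (EuclideanSpace ℝ (Fin n)))) : Prop :=
  ∀ p : ℝ, 1 < p → ∀ w : EuclideanSpace ℝ (Fin n) → ℝ, (∀ x, 0 ≤ w x) →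
    LocallyIntegrable w volume → MuckenhouptAp 𝔅 w p →
    BoundedOnLp volume (volume.withDensity fun x => ENNReal.ofReal (w x)) 𝔅 p

end

open Metric

/-- Spheres are null for a uniformly locally doubling measure. -/
theorem aux_sphere_null {n : ℕ} (ν : Measure (Fin n → ℝ)) [IsLocallyFiniteMeasure ν]
    [IsUnifLocDoublingMeasure ν] (c : Fin n → ℝ) (r : ℝ) (hr : 0 < r) :
    ν (sphere c r) = 0 := by
  have h := IsUnifLocDoublingMeasure.ae_tendsto_measure_inter_div ν (sphere c r) 2
  rw [ae_restrict_iff' isClosed_sphere.measurableSet] at h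
  have h2 : ∀ᵐ x ∂ν, x ∉ sphere c r := by
    filter_upwards [h] with x hx hxs
    replace hx := @hx hxs
    have hxn : ‖x - c‖ = r := by rw [← dist_eq_norm]; exact hxs
    have hδ : Tendsto (fun j : ℕ => (1 : ℝ) / ((j : ℝ) + 1)) atTop (𝓝[>] 0) := by
      rw [tendsto_nhdsWithin_iff]
      refine ⟨tendsto_one_div_add_atTop_nhds_zero_nat, Eventually.of_forall fun j => ?_⟩
      simp only [mem_Ioi]; positivity
    have key := @hx ℕ atTop (fun j => x + (2 * (1 / ((j : ℝ) + 1)) / r) • (x - c))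
      (fun j => 1 / ((j : ℝ) + 1)) hδ ?_
    · have hz : ∀ j : ℕ, ν (sphere c r ∩ closedBall (x + (2 * (1 / ((j : ℝ) + 1)) / r) • (x - c))
          (1 / ((j : ℝ) + 1))) / ν (closedBall (x + (2 * (1 / ((j : ℝ) + 1)) / r) • (x - c))
          (1 / ((j : ℝ) + 1))) = 0 := by
        intro j
        have hd : 0 < 1 / ((j : ℝ) + 1) := by positivity
        set d := 1 / ((j : ℝ) + 1)
        have : sphere c r ∩ closedBall (x + (2 * d / r) • (x - c)) d = ∅ := by
          ext y
          simp only [mem_inter_iff, mem_sphere, mem_closedBall, mem_empty_iff_false, iff_false,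
            not_and, not_le]
          intro hy
          have h1 : dist (x + (2 * d / r) • (x - c)) c = r + 2 * d := by
            rw [dist_eq_norm, show x + (2 * d / r) • (x - c) - c = (1 + 2 * d / r) • (x - c) by
              module, norm_smul, hxn, Real.norm_of_nonneg (by positivity)]
            field_simp
          have h2 := dist_triangle (x + (2 * d / r) • (x - c)) y c
          rw [dist_comm _ y] at h2
          linarith
        rw [this]; simp
      simp only [hz] at key
      exact zero_ne_one (tendsto_nhds_unique tendsto_const_nhds key)
    · refine Eventually.of_forall fun j => ?_
      have hd : 0 < 1 / ((j : ℝ) + 1) := by positivity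
      set d := 1 / ((j : ℝ) + 1)
      rw [mem_closedBall, dist_eq_norm, show x - (x + (2 * d / r) • (x - c)) =
        (-(2 * d / r)) • (x - c) by module, norm_smul, hxn, norm_neg,
        Real.norm_of_nonneg (by positivity)]
      field_simp
      exact le_rfl
  rw [measure_eq_zero_iff_ae_notMem]
  exact h2

theorem aux_cont {n : ℕ} (ν : Measure (Fin n → ℝ)) [IsLocallyFiniteMeasure ν]
    [IsUnifLocDoublingMeasure ν] (c : ℝ → Fin n → ℝ) (ρ : ℝ → ℝ) (hc : Continuous c)
    (hρ : Continuous ρ) (t : ℝ) (ht : 0 < ρ t) :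
    ContinuousAt (fun t => ν (ball (c t) (ρ t))) t := by
  refine tendsto_measure_of_ae_tendsto_indicator (𝓝 t) measurableSet_ball
    (fun _ => measurableSet_ball) (B := ball (c t) (ρ t + 1)) measurableSet_ball
    measure_ball_lt_top.ne ?_ ?_
  · have : Tendsto (fun s => dist (c s) (c t) + ρ s) (𝓝 t) (𝓝 (dist (c t) (c t) + ρ t)) :=
      (Continuous.tendsto (by fun_prop) t)
    rw [dist_self, zero_add] at this
    filter_upwards [this.eventually (gt_mem_nhds (lt_add_one (ρ t)))] with s hs
    exact ball_subset_ball' (by linarith)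
  · have h0 := aux_sphere_null ν (c t) (ρ t) ht
    rw [measure_eq_zero_iff_ae_notMem] at h0
    filter_upwards [h0] with x hx
    have hd : Tendsto (fun s => dist x (c s)) (𝓝 t) (𝓝 (dist x (c t))) :=
      (Continuous.tendsto (by fun_prop) t)
    rcases lt_or_gt_of_ne (show dist x (c t) ≠ ρ t from hx) with h | h
    · filter_upwards [hd.eventually_lt (hρ.tendsto t) h] with s hs
      simp [mem_ball, hs, h]
    · filter_upwards [(hρ.tendsto t).eventually_lt hd h] with s hs
      simp only [mem_ball, not_lt.2 hs.le, not_lt.2 h.le]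

/-- Growing from `ball c' r` to `ball c (2r)`. -/
theorem aux_grow {n : ℕ} (ν : Measure (Fin n → ℝ)) [IsLocallyFiniteMeasure ν]
    [IsUnifLocDoublingMeasure ν] (b : ℝ≥0∞) (hb0 : b ≠ 0) (hb1 : b < 1)
    (H : ℕ → Set (Fin n → ℝ))
    (hstep : ∀ k x r, 0 < r → b * ν (ball x r) ≤ ν (H k ∩ ball x r) → ball x r ⊆ H (k + 1))
    (c c' : Fin n → ℝ) (r : ℝ) (hr : 0 < r) (hcc : dist c' c ≤ r)
    (k : ℕ) (hk : b * ν (ball c' r) ≤ ν (H k ∩ ball c' r)) (i : ℕ) :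
    ∀ t ∈ Icc (0 : ℝ) 1,
      ν (ball (c' + t • (c - c')) (r + t * r)) * b ^ i ≤ ν (ball c' r) →
      ball (c' + t • (c - c')) (r + t * r) ⊆ H (k + i + 1) := by
  have hbt : b ≠ ⊤ := hb1.ne_top
  have hmono : ∀ s t : ℝ, s ≤ t →
      ball (c' + s • (c - c')) (r + s * r) ⊆ ball (c' + t • (c - c')) (r + t * r) := by
    intro s t hst
    apply ball_subset_ball'
    rw [dist_eq_norm, show c' + s • (c - c') - (c' + t • (c - c')) = (t - s) • (c' - c) by module,
      norm_smul, Real.norm_of_nonneg (by linarith), ← dist_eq_norm]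
    nlinarith
  induction i with
  | zero =>
    intro t ht h
    apply hstep _ _ _ (by nlinarith [ht.1])
    have h0 := hmono 0 t ht.1
    simp only [zero_smul, add_zero, zero_mul] at h0
    calc b * ν (ball (c' + t • (c - c')) (r + t * r)) ≤ b * ν (ball c' r) := by
          rw [pow_zero, mul_one] at h; gcongr b * ?_
      _ ≤ ν (H k ∩ ball c' r) := hk
      _ ≤ _ := measure_mono (inter_subset_inter_right _ h0)
  | succ i ih =>
    intro t ht h
    have hbi0 : b ^ i ≠ 0 := pow_ne_zero _ hb0
    have hbit : b ^ i ≠ ⊤ := ENNReal.pow_ne_top hbt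
    set g : ℝ → ℝ≥0∞ := fun s => ν (ball (c' + s • (c - c')) (r + s * r)) with hg
    have hcont : ContinuousOn g (Icc 0 t) := by
      intro s hs
      refine (aux_cont ν (fun s => c' + s • (c - c')) (fun s => r + s * r) (by fun_prop)
        (by fun_prop) s ?_).continuousWithinAt
      nlinarith [hs.1]
    have hg0 : g 0 = ν (ball c' r) := by simp [hg]
    have hv : min (g t) (ν (ball c' r) / b ^ i) ∈ Icc (g 0) (g t) := by
      refine ⟨le_min (measure_mono (hmono 0 t ht.1)) ?_, min_le_left _ _⟩
      rw [hg0, ENNReal.le_div_iff_mul_le (Or.inl hbi0) (Or.inl hbit)]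
      exact mul_le_of_le_one_right' (pow_le_one' hb1.le _)
    obtain ⟨s, hs, hsv⟩ := intermediate_value_Icc ht.1 hcont hv
    have hs1 : g s * b ^ i ≤ ν (ball c' r) := by
      rw [← ENNReal.le_div_iff_mul_le (Or.inl hbi0) (Or.inl hbit), hsv]
      exact min_le_right _ _
    have hs2 : b * g t ≤ g s := by
      rw [hsv]
      refine le_min (mul_le_of_le_one_left' hb1.le) ?_
      rw [ENNReal.le_div_iff_mul_le (Or.inl hbi0) (Or.inl hbit)]
      calc b * g t * b ^ i = g t * b ^ (i + 1) := by ring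
        _ ≤ _ := h
    have hsub := ih s ⟨hs.1, hs.2.trans ht.2⟩ hs1
    apply hstep _ _ _ (by nlinarith [ht.1])
    refine hs2.trans (measure_mono ?_)
    exact subset_inter hsub (hmono s t hs.2)

/-- Covering a cube by its `2^n` dyadic children. -/
theorem aux_children {n : ℕ} (c : Fin n → ℝ) (r : ℝ) (hr : 0 < r) (x : Fin n → ℝ)
    (hx : x ∈ ball c (2 * r)) :
    ∃ s : Fin n → Bool, x ∈ closedBall (fun i => c i + if s i then r else -r) r := by
  refine ⟨fun i => decide (c i ≤ x i), ?_⟩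
  rw [mem_closedBall, dist_pi_le_iff hr.le]
  intro i
  have hi := (dist_le_pi_dist x c i).trans_lt hx
  rw [Real.dist_eq, abs_lt] at hi
  rw [Real.dist_eq, abs_le]
  by_cases h : c i ≤ x i
  · simp only [h, decide_true, if_true]; constructor <;> linarith
  · simp only [h, decide_false]; constructor <;> simp <;> linarith

theorem aux_child_dist {n : ℕ} (c : Fin n → ℝ) (r : ℝ) (hr : 0 < r) (s : Fin n → Bool) :
    dist (fun i => c i + if s i then r else -r) c ≤ r := by
  rw [dist_pi_le_iff hr.le]
  intro i
  rw [Real.dist_eq]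
  split_ifs <;> simp [abs_of_pos hr]

theorem aux_child_disj {n : ℕ} (c : Fin n → ℝ) (r : ℝ) (s s' : Fin n → Bool)
    (h : s ≠ s') : Disjoint (ball (fun i => c i + if s i then r else -r) r)
      (ball (fun i => c i + if s' i then r else -r) r) := by
  obtain ⟨i, hi⟩ := Function.ne_iff.1 h
  rw [Set.disjoint_left]
  intro x hx hx'
  have h1 := (dist_le_pi_dist _ _ i).trans_lt hx
  have h2 := (dist_le_pi_dist _ _ i).trans_lt hx'
  rw [Real.dist_eq, abs_lt] at h1 h2
  cases hs : s i <;> cases hs' : s' i <;> simp [hs, hs'] at h1 h2 hi <;> linarith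

/-- Points all of whose small cubes have large density. -/
def auxF {n : ℕ} (ν : Measure (Fin n → ℝ)) (b : ℝ≥0∞) (E : Set (Fin n → ℝ)) (δ : ℝ) :
    Set (Fin n → ℝ) :=
  {x | ∀ w d, d ≤ δ → x ∈ ball w d → b * ν (ball w d) < ν (E ∩ ball w d)}

theorem aux_cz {n : ℕ} (ν : Measure (Fin n → ℝ)) [IsLocallyFiniteMeasure ν]
    [IsUnifLocDoublingMeasure ν] (b : ℝ≥0∞) (hb0 : b ≠ 0) (hb1 : b < 1) (C : ℝ≥0∞)
    (hdbl : ∀ c c' r, 0 < r → ball c' r ⊆ ball c (2 * r) →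
      ν (ball c (2 * r)) ≤ C * ν (ball c' r))
    (H : ℕ → Set (Fin n → ℝ)) (hm : ∀ k, MeasurableSet (H k))
    (hstep : ∀ k x r, 0 < r → b * ν (ball x r) ≤ ν (H k ∩ ball x r) → ball x r ⊆ H (k + 1))
    (k i : ℕ) (hi : C * b ^ i ≤ 1) (j : ℕ) :
    ∀ c r, 0 < r → ν (H k ∩ ball c r) ≤ b * ν (ball c r) →
      ν (H k ∩ ball c r ∩ auxF ν b (H k) (r / 2 ^ j)) ≤ b * ν (H (k + i + 1) ∩ ball c r) := by
  induction j with
  | zero =>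
    intro c r hr h
    have : H k ∩ ball c r ∩ auxF ν b (H k) (r / 2 ^ 0) = ∅ := by
      ext x
      simp only [mem_inter_iff, mem_empty_iff_false, iff_false, not_and]
      intro hx hF
      exact absurd (hF c r (by simp) hx.2) (not_lt.2 h)
    rw [this]; simp
  | succ j ih =>
    intro c r hr h
    set ch : (Fin n → Bool) → Fin n → ℝ := fun s i => c i + if s i then r / 2 else -(r / 2)
      with hch
    have hr2 : 0 < r / 2 := by linarith
    have h2 : 2 * (r / 2) = r := by ring
    have hdist : ∀ s, dist (ch s) c ≤ r / 2 := fun s => aux_child_dist c (r / 2) hr2 s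
    have hsub : ∀ s, ball (ch s) (r / 2) ⊆ ball c r := fun s =>
      ball_subset_ball' (by linarith [hdist s])
    by_cases hbig : ∃ s, b * ν (ball (ch s) (r / 2)) ≤ ν (H k ∩ ball (ch s) (r / 2))
    · obtain ⟨s, hs⟩ := hbig
      have hg := aux_grow ν b hb0 hb1 H hstep c (ch s) (r / 2) hr2 (hdist s) k hs i 1
        (by simp)
      have e1 : ch s + (1 : ℝ) • (c - ch s) = c := by module
      have e2 : r / 2 + 1 * (r / 2) = r := by ring
      rw [e1, e2] at hg
      have hQ : ball c r ⊆ H (k + i + 1) := by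
        apply hg
        have := hdbl c (ch s) (r / 2) hr2 (by rw [h2]; exact hsub s)
        rw [h2] at this
        calc ν (ball c r) * b ^ i ≤ C * ν (ball (ch s) (r / 2)) * b ^ i := by gcongr
          _ = (C * b ^ i) * ν (ball (ch s) (r / 2)) := by ring
          _ ≤ 1 * ν (ball (ch s) (r / 2)) := by gcongr
          _ = _ := one_mul _
      rw [inter_eq_self_of_subset_right hQ]
      exact (measure_mono inter_subset_left).trans h
    · push Not at hbig
      set G := auxF ν b (H k) (r / 2 ^ (j + 1)) with hG
      have eG : r / 2 ^ (j + 1) = r / 2 / 2 ^ j := by rw [pow_succ]; field_simp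
      have hcov : H k ∩ ball c r ∩ G ⊆ (⋃ s, (H k ∩ ball (ch s) (r / 2) ∩ G)) ∪
          ⋃ s, sphere (ch s) (r / 2) := by
        rintro x ⟨⟨hxH, hxb⟩, hxG⟩
        obtain ⟨s, hs⟩ := aux_children c (r / 2) hr2 x (by rw [h2]; exact hxb)
        rcases lt_or_eq_of_le (mem_closedBall.1 hs) with h' | h'
        · exact Or.inl (mem_iUnion.2 ⟨s, ⟨hxH, h'⟩, hxG⟩)
        · exact Or.inr (mem_iUnion.2 ⟨s, h'⟩)
      have hnull : ν (⋃ s, sphere (ch s) (r / 2)) = 0 :=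
        measure_iUnion_null fun s => aux_sphere_null ν _ _ hr2
      calc ν (H k ∩ ball c r ∩ G)
          ≤ ν (⋃ s, (H k ∩ ball (ch s) (r / 2) ∩ G)) + ν (⋃ s, sphere (ch s) (r / 2)) :=
            (measure_mono hcov).trans (measure_union_le _ _)
        _ = ν (⋃ s, (H k ∩ ball (ch s) (r / 2) ∩ G)) := by rw [hnull, add_zero]
        _ ≤ ∑ s, ν (H k ∩ ball (ch s) (r / 2) ∩ G) := measure_iUnion_fintype_le _ _
        _ ≤ ∑ s, b * ν (H (k + i + 1) ∩ ball (ch s) (r / 2)) := by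
            apply Finset.sum_le_sum
            intro s _
            have := ih (ch s) (r / 2) hr2 (hbig s).le
            rwa [← eG] at this
        _ = b * ν (⋃ s, H (k + i + 1) ∩ ball (ch s) (r / 2)) := by
            rw [← Finset.mul_sum, measure_iUnion, tsum_fintype]
            · intro s s' hss
              exact (aux_child_disj c (r / 2) s s' hss).mono inter_subset_right inter_subset_right
            · exact fun s => (hm _).inter measurableSet_ball
        _ ≤ _ := by
            gcongr
            exact iUnion_subset fun s => inter_subset_inter_right _ (hsub s)

theorem aux_density {n : ℕ} (ν : Measure (Fin n → ℝ)) [IsLocallyFiniteMeasure ν]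
    [IsUnifLocDoublingMeasure ν] (b : ℝ≥0∞) (hb1 : b < 1)
    (E : Set (Fin n → ℝ)) (hE : MeasurableSet E) (r : ℝ) :
    ∀ᵐ x ∂ν, x ∈ E → ∃ j : ℕ, x ∈ auxF ν b E (r / 2 ^ j) := by
  have h := IsUnifLocDoublingMeasure.ae_tendsto_measure_inter_div ν E 1
  rw [ae_restrict_iff' hE] at h
  filter_upwards [h] with x hx hxE
  replace hx := @hx hxE
  by_contra hcon
  simp only [auxF, Set.mem_ofPred_eq] at hcon
  push Not at hcon
  choose w d hd hxw hle using hcon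
  have hd0 : ∀ j, 0 < d j := fun j => dist_nonneg.trans_lt (mem_ball.1 (hxw j))
  have hlim : Tendsto d atTop (𝓝[>] 0) := by
    rw [tendsto_nhdsWithin_iff]
    refine ⟨squeeze_zero (fun j => (hd0 j).le) hd ?_, Eventually.of_forall hd0⟩
    have := (tendsto_pow_atTop_nhds_zero_of_lt_one (r := (1 / 2 : ℝ)) (by norm_num)
      (by norm_num)).const_mul r
    simp only [mul_zero] at this
    refine this.congr fun j => ?_
    rw [one_div, inv_pow]; rfl
  have key := @hx ℕ atTop w d hlim (Eventually.of_forall fun j => by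
    rw [one_mul]; exact ball_subset_closedBall (hxw j))
  have hb : ∀ j, ν (E ∩ closedBall (w j) (d j)) / ν (closedBall (w j) (d j)) ≤ b := by
    intro j
    have hs := aux_sphere_null ν (w j) (d j) (hd0 j)
    have e1 : ν (closedBall (w j) (d j)) = ν (ball (w j) (d j)) := by
      refine le_antisymm ?_ (measure_mono ball_subset_closedBall)
      rw [← ball_union_sphere]
      exact (measure_union_le _ _).trans (by rw [hs, add_zero])
    have e2 : ν (E ∩ closedBall (w j) (d j)) ≤ ν (E ∩ ball (w j) (d j)) := by
      rw [← ball_union_sphere, inter_union_distrib_left]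
      refine (measure_union_le _ _).trans ?_
      rw [measure_mono_null inter_subset_right hs, add_zero]
    rw [e1]
    refine ENNReal.div_le_of_le_mul ?_
    exact e2.trans (hle j)
  exact absurd (le_of_tendsto' key hb) (not_le.2 hb1)

theorem aux_cz_lim {n : ℕ} (ν : Measure (Fin n → ℝ)) [IsLocallyFiniteMeasure ν]
    [IsUnifLocDoublingMeasure ν] (b : ℝ≥0∞) (hb0 : b ≠ 0) (hb1 : b < 1) (C : ℝ≥0∞)
    (hdbl : ∀ c c' r, 0 < r → ball c' r ⊆ ball c (2 * r) →
      ν (ball c (2 * r)) ≤ C * ν (ball c' r))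
    (H : ℕ → Set (Fin n → ℝ)) (hm : ∀ k, MeasurableSet (H k))
    (hstep : ∀ k x r, 0 < r → b * ν (ball x r) ≤ ν (H k ∩ ball x r) → ball x r ⊆ H (k + 1))
    (k i : ℕ) (hi : C * b ^ i ≤ 1) (c : Fin n → ℝ) (r : ℝ) (hr : 0 < r)
    (h : ν (H k ∩ ball c r) ≤ b * ν (ball c r)) :
    ν (H k ∩ ball c r) ≤ b * ν (H (k + i + 1) ∩ ball c r) := by
  have hmon : Monotone fun j : ℕ => H k ∩ ball c r ∩ auxF ν b (H k) (r / 2 ^ j) := by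
    intro j j' hjj
    refine inter_subset_inter_right _ ?_
    intro x hx w d hd hw
    refine hx w d (hd.trans ?_) hw
    gcongr
    norm_num
  calc ν (H k ∩ ball c r) ≤ ν (⋃ j : ℕ, H k ∩ ball c r ∩ auxF ν b (H k) (r / 2 ^ j)) := by
        apply measure_mono_ae
        filter_upwards [aux_density ν b hb1 (H k) (hm k) r] with x hx hxH
        obtain ⟨j, hj⟩ := hx hxH.1
        exact mem_iUnion.2 ⟨j, hxH, hj⟩
    _ = ⨆ j : ℕ, ν (H k ∩ ball c r ∩ auxF ν b (H k) (r / 2 ^ j)) := hmon.measure_iUnion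
    _ ≤ _ := iSup_le fun j => aux_cz ν b hb0 hb1 C hdbl H hm hstep k i hi j c r hr h

theorem aux_core {n : ℕ} (ν : Measure (Fin n → ℝ)) [IsLocallyFiniteMeasure ν]
    [IsUnifLocDoublingMeasure ν] (b : ℝ≥0∞) (hb0 : b ≠ 0) (hb1 : b < 1) (C : ℝ≥0∞)
    (hdbl : ∀ c c' r, 0 < r → ball c' r ⊆ ball c (2 * r) →
      ν (ball c (2 * r)) ≤ C * ν (ball c' r))
    (H : ℕ → Set (Fin n → ℝ)) (hm : ∀ k, MeasurableSet (H k))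
    (hstep : ∀ k x r, 0 < r → b * ν (ball x r) ≤ ν (H k ∩ ball x r) → ball x r ⊆ H (k + 1))
    (i : ℕ) (hi : C * b ^ i ≤ 1) (c : Fin n → ℝ) (r : ℝ) (hr : 0 < r) (a : ℝ≥0∞)
    (h : a * ν (ball c r) ≤ ν (H 0 ∩ ball c r)) (J : ℕ) (hJ : b ^ J * b ≤ a) :
    ball c r ⊆ H (J * (i + 1) + 1) := by
  have hfull : ∀ k l, ball c r ⊆ H k → ball c r ⊆ H (k + l) := by
    intro k l hk
    induction l with
    | zero => exact hk
    | succ l ih =>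
      refine hstep (k + l) _ _ hr ?_
      rw [inter_eq_self_of_subset_right ih]
      exact mul_le_of_le_one_left' hb1.le
  have key : ∀ j : ℕ, a * ν (ball c r) ≤ b ^ j * ν (H (j * (i + 1)) ∩ ball c r) ∨
      b * ν (ball c r) ≤ ν (H (j * (i + 1)) ∩ ball c r) := by
    intro j
    induction j with
    | zero => left; simpa using h
    | succ j ih =>
      have e : (j + 1) * (i + 1) = j * (i + 1) + i + 1 := by ring
      rw [e]
      by_cases hbig : b * ν (ball c r) ≤ ν (H (j * (i + 1)) ∩ ball c r)
      · right
        have h1 := hfull _ i (hstep _ _ _ hr hbig)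
        rw [show j * (i + 1) + 1 + i = j * (i + 1) + i + 1 by ring] at h1
        rw [inter_eq_self_of_subset_right h1]
        exact mul_le_of_le_one_left' hb1.le
      · left
        have h1 := ih.resolve_right hbig
        have h2 := aux_cz_lim ν b hb0 hb1 C hdbl H hm hstep (j * (i + 1)) i hi c r hr
          (not_le.1 hbig).le
        calc a * ν (ball c r) ≤ b ^ j * ν (H (j * (i + 1)) ∩ ball c r) := h1
          _ ≤ b ^ j * (b * ν (H (j * (i + 1) + i + 1) ∩ ball c r)) := by gcongr
          _ = _ := by ring
  apply hstep _ _ _ hr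
  rcases key J with h1 | h1
  · have hbJ0 : b ^ J ≠ 0 := pow_ne_zero _ hb0
    have hbJt : b ^ J ≠ ⊤ := ENNReal.pow_ne_top hb1.ne_top
    rw [← ENNReal.mul_le_mul_iff_right hbJ0 hbJt]
    calc b ^ J * (b * ν (ball c r)) = b ^ J * b * ν (ball c r) := by ring
      _ ≤ a * ν (ball c r) := by gcongr
      _ ≤ _ := h1
  · exact h1

theorem aux_unifDoubling {n : ℕ} (ν : Measure (Fin n → ℝ)) (C : NNReal)
    (hdbl : ∀ c c' r, 0 < r → ball c' r ⊆ ball c (2 * r) →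
      ν (ball c (2 * r)) ≤ C * ν (ball c' r)) : IsUnifLocDoublingMeasure ν := by
  refine ⟨C * C, ?_⟩
  filter_upwards [self_mem_nhdsWithin] with ε (hε : 0 < ε) x
  have h1 := hdbl x x ε hε (ball_subset_ball (by linarith))
  have h2 := hdbl x x (2 * ε) (by linarith) (ball_subset_ball (by linarith))
  calc ν (closedBall x (2 * ε)) ≤ ν (ball x (2 * (2 * ε))) :=
        measure_mono (closedBall_subset_ball (by linarith))
    _ ≤ C * (C * ν (ball x ε)) := h2.trans (by gcongr)
    _ ≤ C * (C * ν (closedBall x ε)) := by gcongr; exact ball_subset_closedBall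
    _ = _ := by push_cast; ring


theorem aux_pos {n : ℕ} (ν : Measure (Fin n → ℝ)) (C : ℝ≥0∞)
    (hdbl : ∀ c c' r, 0 < r → ball c' r ⊆ ball c (2 * r) →
      ν (ball c (2 * r)) ≤ C * ν (ball c' r)) (c : Fin n → ℝ) (r : ℝ)
    (h : ν (ball c r) ≠ 0) (x : Fin n → ℝ) (s : ℝ) (hs : 0 < s) : ν (ball x s) ≠ 0 := by
  intro h0
  have hk : ∀ k : ℕ, ν (ball x (2 ^ k * s)) = 0 := by
    intro k
    induction k with
    | zero => simpa using h0
    | succ k ih =>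
      have := hdbl x x (2 ^ k * s) (by positivity) (ball_subset_ball (by
        have : 0 < 2 ^ k * s := by positivity
        linarith))
      rw [ih, mul_zero] at this
      rw [pow_succ, mul_comm (2 ^ k : ℝ) 2, mul_assoc]
      exact le_antisymm this bot_le
  obtain ⟨k, hkk⟩ := pow_unbounded_of_one_lt ((r + dist c x) / s) one_lt_two
  rw [div_lt_iff₀ hs] at hkk
  exact h (measure_mono_null (ball_subset_ball' hkk.le) (hk k))

theorem aux_rect_open {n : ℕ} {R : Set (EuclideanSpace ℝ (Fin n))} (h : IsRect R) : IsOpen R := by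
  obtain ⟨f, S, ⟨a, b, hab, rfl⟩, rfl⟩ := h
  refine f.toHomeomorph.isOpenMap _ ?_
  rw [Set.ofPred_forall]
  refine isOpen_iInter_of_finite fun i => ?_
  exact isOpen_Ioo.preimage (by fun_prop : Continuous fun x : EuclideanSpace ℝ (Fin n) => x i)

theorem aux_maxOp_meas {n : ℕ} (μ : Measure (EuclideanSpace ℝ (Fin n)))
    (𝔅 : Set (Set (EuclideanSpace ℝ (Fin n)))) (ho : ∀ B ∈ 𝔅, IsOpen B)
    (f : EuclideanSpace ℝ (Fin n) → ℝ) : Measurable (maxOp μ 𝔅 f) := by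
  apply LowerSemicontinuous.measurable
  unfold maxOp
  refine lowerSemicontinuous_biSup fun B hB => ?_
  have : (fun x => ⨆ (_ : x ∈ B) (_ : 0 < μ B), (∫⁻ y in B, ENNReal.ofReal |f y| ∂μ) / μ B) =
      B.indicator fun _ => ⨆ (_ : 0 < μ B), (∫⁻ y in B, ENNReal.ofReal |f y| ∂μ) / μ B := by
    ext x
    by_cases hx : x ∈ B <;> simp [hx]
  rw [this]
  exact (ho B hB).lowerSemicontinuous_indicator bot_le

theorem aux_Hiter_meas {n : ℕ} (μ : Measure (EuclideanSpace ℝ (Fin n)))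
    (𝔅 : Set (Set (EuclideanSpace ℝ (Fin n)))) (ho : ∀ B ∈ 𝔅, IsOpen B) (β : ℝ)
    (E : Set (EuclideanSpace ℝ (Fin n))) (hE : MeasurableSet E) (k : ℕ) :
    MeasurableSet (Hiter μ 𝔅 β E k) := by
  cases k with
  | zero => exact hE
  | succ k => exact measurableSet_le measurable_const (aux_maxOp_meas μ 𝔅 ho _)

theorem aux_maxOp_step {n : ℕ} (μ : Measure (EuclideanSpace ℝ (Fin n)))
    (𝔅 : Set (Set (EuclideanSpace ℝ (Fin n)))) (b : ℝ≥0∞)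
    (S : Set (EuclideanSpace ℝ (Fin n))) (hS : MeasurableSet S)
    (B : Set (EuclideanSpace ℝ (Fin n))) (hB : B ∈ 𝔅) (h0 : μ B ≠ 0) (ht : μ B ≠ ⊤)
    (h : b * μ B ≤ μ (S ∩ B)) (x : EuclideanSpace ℝ (Fin n)) (hx : x ∈ B) :
    b ≤ maxOp μ 𝔅 (S.indicator 1) x := by
  unfold maxOp
  refine le_iSup_of_le B (le_iSup_of_le hB (le_iSup_of_le hx (le_iSup_of_le h0.bot_lt ?_)))
  rw [ENNReal.le_div_iff_mul_le (Or.inl h0) (Or.inl ht)]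
  have : (fun y => ENNReal.ofReal |(S.indicator 1 : EuclideanSpace ℝ (Fin n) → ℝ) y|) =
      S.indicator 1 := by
    ext y
    by_cases hy : y ∈ S <;> simp [hy]
  rw [this, lintegral_indicator_one hS, Measure.restrict_apply hS]
  exact h

/-- Parametrization of a rectangle by the unit cube `ball 0 1` of `Fin n → ℝ`. -/
theorem aux_param {n : ℕ} {R : Set (EuclideanSpace ℝ (Fin n))} (h : IsRect R) :
    ∃ T : (Fin n → ℝ) ≃ₜ EuclideanSpace ℝ (Fin n), R = T '' ball 0 1 ∧
      ∀ (c c' y : Fin n → ℝ) (s : ℝ), T (c + s • y) = T c + s • (T (c' + y) - T c') := by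
  obtain ⟨f, S, ⟨a, b, hab, rfl⟩, rfl⟩ := h
  have hl : ∀ i, 0 < (b i - a i) / 2 := fun i => by linarith [hab i]
  set l : Fin n → ℝ := fun i => (b i - a i) / 2 with hldef
  set m : Fin n → ℝ := fun i => (a i + b i) / 2 with hmdef
  let P : (Fin n → ℝ) ≃ₜ (Fin n → ℝ) := Homeomorph.piCongrRight fun i =>
    (Homeomorph.mulLeft₀ (l i) (hl i).ne').trans (Homeomorph.addLeft (m i))
  let Q : (Fin n → ℝ) ≃ₜ EuclideanSpace ℝ (Fin n) :=
    P.trans (PiLp.continuousLinearEquiv 2 ℝ (fun _ : Fin n => ℝ)).symm.toHomeomorph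
  have hQ : ∀ x i, Q x i = m i + l i * x i := fun x i => rfl
  have hf : ∀ p q r : EuclideanSpace ℝ (Fin n), ∀ s : ℝ, f (p + s • (q - r)) =
      f p + s • (f q - f r) := by
    intro p q r s
    let F := f.toRealAffineIsometryEquiv
    have hF : ∀ p, F p = f p := fun p => rfl
    have h1 := F.map_vadd p (s • (q - r))
    have h2 := F.map_vsub q r
    simp only [vadd_eq_add, vsub_eq_sub, hF] at h1 h2
    rw [add_comm, h1, map_smul, h2, add_comm]
  refine ⟨Q.trans f.toHomeomorph, ?_, ?_⟩
  · have : {x : EuclideanSpace ℝ (Fin n) | ∀ i, x i ∈ Ioo (a i) (b i)} = Q '' ball 0 1 := by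
      ext x
      obtain ⟨y, rfl⟩ := Q.surjective x
      rw [Q.injective.mem_set_image, mem_ball, dist_pi_lt_iff one_pos]
      refine forall_congr' fun i => ?_
      have := hl i
      rw [hQ, Real.dist_eq, abs_lt, Pi.zero_apply, sub_zero]
      constructor
      · rintro ⟨h1, h2⟩
        simp only [hldef, hmdef] at h1 h2
        constructor <;> nlinarith
      · rintro ⟨h1, h2⟩
        simp only [hldef, hmdef]
        constructor <;> nlinarith
    rw [this, image_image]
    rfl
  · intro c c' y s
    have : Q (c + s • y) = Q c + s • (Q (c' + y) - Q c') := by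
      ext i
      simp only [hQ, PiLp.add_apply, PiLp.smul_apply, PiLp.sub_apply, Pi.add_apply, Pi.smul_apply,
        smul_eq_mul]
      ring
    change f (Q _) = f (Q _) + s • (f (Q _) - f (Q _))
    rw [this, hf]

theorem aux_image_ball {n : ℕ} (T : (Fin n → ℝ) → EuclideanSpace ℝ (Fin n))
    (hT : ∀ (c c' y : Fin n → ℝ) (s : ℝ), T (c + s • y) = T c + s • (T (c' + y) - T c'))
    (c c' : Fin n → ℝ) (r s : ℝ) (hs : 0 < s) :
    T '' ball c (s * r) = (T c - s • T c') +ᵥ s • (T '' ball c' r) := by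
  ext z
  simp only [mem_image, mem_vadd_set, mem_smul_set, vadd_eq_add]
  constructor
  · rintro ⟨x, hx, rfl⟩
    refine ⟨_, ⟨_, ⟨c' + s⁻¹ • (x - c), ?_, rfl⟩, rfl⟩, ?_⟩
    · rw [mem_ball, dist_eq_norm, add_sub_cancel_left, norm_smul, norm_inv,
        Real.norm_of_nonneg hs.le, ← dist_eq_norm, inv_mul_lt_iff₀ hs]
      exact hx
    · have := hT c c' (s⁻¹ • (x - c)) s
      rw [smul_inv_smul₀ hs.ne', add_sub_cancel] at this
      rw [this]
      module
  · rintro ⟨_, ⟨_, ⟨y, hy, rfl⟩, rfl⟩, rfl⟩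
    refine ⟨c + s • (y - c'), ?_, ?_⟩
    · rw [mem_ball, dist_eq_norm, add_sub_cancel_left, norm_smul, Real.norm_of_nonneg hs.le,
        ← dist_eq_norm]
      exact mul_lt_mul_of_pos_left hy hs
    · rw [hT c c', add_sub_cancel]
      module

theorem aux_num1 (α β : ℝ) (hβ : β ∈ Ioo (0 : ℝ) 1) (hα : α ∈ Ioo (0 : ℝ) β) :
    β ^ ⌈Real.logb 2 (β / α) / Real.logb 2 (1 / β)⌉₊ * β ≤ α := by
  set J := ⌈Real.logb 2 (β / α) / Real.logb 2 (1 / β)⌉₊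
  have h1 : 1 < 1 / β := by rw [lt_div_iff₀ hβ.1]; linarith [hβ.2]
  have hL : 0 < Real.logb 2 (1 / β) := Real.logb_pos (by norm_num) h1
  have h2 : Real.logb 2 (β / α) / Real.logb 2 (1 / β) ≤ J := Nat.le_ceil _
  rw [div_le_iff₀ hL, ← Real.logb_pow, Real.logb_le_logb (by norm_num)
    (div_pos hβ.1 hα.1) (by have := hβ.1; positivity), div_pow, one_pow,
    div_le_div_iff₀ hα.1 (pow_pos hβ.1 _)] at h2
  linarith

theorem aux_num2 (Δ β : ℝ) (hβ : β ∈ Ioo (0 : ℝ) 1) (hΔ : 1 < Δ) :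
    ∃ i, ⌈2 + max (Real.logb 2 (β * Δ)) 0 / Real.logb 2 (1 / β)⌉₊ = i + 1 ∧ Δ * β ^ i ≤ 1 := by
  set x := max (Real.logb 2 (β * Δ)) 0 / Real.logb 2 (1 / β) with hx
  have h1 : 1 < 1 / β := by rw [lt_div_iff₀ hβ.1]; linarith [hβ.2]
  have hL : 0 < Real.logb 2 (1 / β) := Real.logb_pos (by norm_num) h1
  have hx0 : 0 ≤ x := div_nonneg (le_max_right _ _) hL.le
  refine ⟨⌈x⌉₊ + 1, ?_, ?_⟩
  · rw [add_comm, show (2 : ℝ) = ((2 : ℕ) : ℝ) by norm_num, Nat.ceil_add_natCast hx0]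
  · have h2 : x ≤ ⌈x⌉₊ := Nat.le_ceil _
    rw [hx, div_le_iff₀ hL, ← hx] at h2
    have h3 := (le_max_left _ _).trans h2
    rw [← Real.logb_pow, Real.logb_le_logb (by norm_num)
      (mul_pos hβ.1 (by linarith)) (by have := hβ.1; positivity), div_pow, one_pow,
      le_div_iff₀ (pow_pos hβ.1 _)] at h3
    rw [pow_succ]
    linarith

/-- Lemma `l.main` of the paper. Let `𝔊` be a homothecy invariant
collection of open rectangles, `μ` a nonzero locally finite Borel measure doubling
w.r.t. `𝔊` with constant `Δ`, and `β ∈ (0,1)`. If `E` is Borel, `R ∈ 𝔊` with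
`μ(R) > 0` and `μ(E ∩ R)/μ(R) = α ∈ (0,β)`, then `R ⊆ H_β^{k_{α,β}}(E)` with
`k_{α,β} = ⌈log₂(β/α)/log₂(1/β)⌉ · ⌈2 + log₂⁺(β·Δ)/log₂(1/β)⌉ + 1`. -/
theorem statement7 (n : ℕ) (𝔊 : Set (Set (EuclideanSpace ℝ (Fin n))))
    (hG : ∀ R ∈ 𝔊, IsRect R) (hhom : HomothecyInvariant 𝔊)
    (μ : Measure (EuclideanSpace ℝ (Fin n)))
    (hloc : IsLocallyFiniteMeasure μ) (hμ : μ ≠ 0)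
    (Δ : ℝ) (hΔ : 1 < Δ) (hdbl : DoublingWrt μ 𝔊 Δ)
    (β : ℝ) (hβ : β ∈ Set.Ioo (0 : ℝ) 1)
    (E : Set (EuclideanSpace ℝ (Fin n))) (hE : MeasurableSet E)
    (R : Set (EuclideanSpace ℝ (Fin n))) (hR : R ∈ 𝔊) (hRpos : 0 < μ R)
    (α : ℝ) (hα : α ∈ Set.Ioo (0 : ℝ) β)
    (hratio : μ (E ∩ R) = ENNReal.ofReal α * μ R) :
    R ⊆ Hiter μ 𝔊 β E
      (⌈Real.logb 2 (β / α) / Real.logb 2 (1 / β)⌉₊ *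
        ⌈2 + max (Real.logb 2 (β * Δ)) 0 / Real.logb 2 (1 / β)⌉₊ + 1) := by
  have ho : ∀ B ∈ 𝔊, IsOpen B := fun B hB => aux_rect_open (hG B hB)
  obtain ⟨T, hRT, hT⟩ := aux_param (hG R hR)
  have himg := aux_image_ball T hT
  have hmem : ∀ c r, 0 < r → T '' ball c r ∈ 𝔊 := by
    intro c r hr
    have := himg c 0 1 r hr
    rw [mul_one, ← hRT] at this
    rw [this]
    exact (hhom _ ((hhom R hR).2 r hr)).1 _
  set ν : Measure (Fin n → ℝ) := μ.map T.symm with hν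
  have hνa : ∀ A, ν A = μ (T '' A) := by
    intro A
    rw [hν, show ⇑T.symm = ⇑T.symm.toMeasurableEquiv from rfl, MeasurableEquiv.map_apply]
    congr 1
    exact T.image_eq_preimage_symm A |>.symm
  haveI : IsFiniteMeasureOnCompacts ν := ⟨fun K hK => by
    rw [hνa]; exact (hK.image T.continuous).measure_lt_top⟩
  haveI : IsLocallyFiniteMeasure ν := isLocallyFiniteMeasure_of_isFiniteMeasureOnCompacts
  have hdbl' : ∀ c c' r, 0 < r → ball c' r ⊆ ball c (2 * r) →
      ν (ball c (2 * r)) ≤ (Real.toNNReal Δ : ℝ≥0∞) * ν (ball c' r) := by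
    intro c c' r hr hsub
    rw [hνa, hνa]
    have e := himg c c' r 2 two_pos
    have := hdbl _ (hmem c' r hr) (T c - (2 : ℝ) • T c') (by rw [← e]; exact image_mono hsub)
    rwa [← e] at this
  haveI := aux_unifDoubling ν _ hdbl'
  have hpos := aux_pos ν _ hdbl' 0 1 (by rw [hνa, ← hRT]; exact hRpos.ne')
  obtain ⟨i, hi, hΔi⟩ := aux_num2 Δ β hβ hΔ
  have hJ := aux_num1 α β hβ hα
  have hβ0 := hβ.1
  have hHm := aux_Hiter_meas μ 𝔊 ho β E hE
  have himgi : ∀ (S : Set (EuclideanSpace ℝ (Fin n))) A, T '' (T ⁻¹' S ∩ A) = S ∩ T '' A := by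
    intro S A
    rw [inter_comm, image_inter_preimage, inter_comm]
  have key := aux_core ν (ENNReal.ofReal β) (by simpa using hβ0)
    (by rw [ENNReal.ofReal_lt_one]; exact hβ.2) _ hdbl'
    (fun k => T ⁻¹' Hiter μ 𝔊 β E k) (fun k => T.continuous.measurable (hHm k))
    (by
      intro k x r hr h y hy
      rw [hνa, hνa, himgi] at h
      refine aux_maxOp_step μ 𝔊 _ _ (hHm k) (T '' ball x r) (hmem x r hr) ?_ ?_ h (T y)
        (mem_image_of_mem T hy)
      · rw [← hνa]; exact hpos x r hr
      · rw [← hνa]; exact measure_ball_lt_top.ne)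
    i (by
      change ENNReal.ofReal Δ * _ ≤ 1
      rw [← ENNReal.ofReal_pow hβ0.le, ← ENNReal.ofReal_mul (by linarith)]
      exact ENNReal.ofReal_le_one.2 hΔi)
    0 1 one_pos (ENNReal.ofReal α)
    (by
      rw [hνa, hνa, himgi, ← hRT]
      exact hratio.ge) _
    (by
      rw [← ENNReal.ofReal_pow hβ0.le, ← ENNReal.ofReal_mul (by positivity)]
      exact ENNReal.ofReal_le_ofReal hJ)
  rw [hi, hRT]
  exact image_subset_iff.2 key
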